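/- Fix positive integers $r,\Delta$ and a bipartite $\Delta$-bounded graph sequence $\mathcal{F}=\{F_1,F_2,\dots\}$. For any $0<t\leq n$ and any $r$-edge-colouring of $K_n$, there exists a collection of at most $64\Delta r^\Delta(\log(n/t)+2)$ pairwise vertex-disjoint monochromatic subgraphs, each isomorphic to some element of $\mathcal{F}$, whose union covers more than $n-t$ vertices of $K_n$. -/

import Mathlib

/-! Let `A` be the common neighbourhood, in the densest colour `R`, of `Δ` random vertices.
By convexity `A` is large on average, whereas a `Δ`-tuple with fewer than `k` common neighbours
rarely lies in `A`; so for some outcome almost all `Δ`-tuples of `A` have at least `k` common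
neighbours (dependent random choice). A graph on `k` vertices with maximum degree `Δ` is then
mapped into `A` one vertex at a time, keeping for each neighbourhood the proportion of bad
completions of its partial image small, so that eventually every neighbourhood has an image with
`k` common neighbours. If the graph is bipartite, one side can stay where it is while the other is
moved into these common neighbourhoods; this gives monochromatic copies of linear size. Removing
such copies greedily shrinks the uncovered set by a constant factor at each step. -/

section BadExtensions

open Finset

variable {V : Type*} [DecidableEq V] (Bad : Finset V → Prop) [DecidablePred Bad] (A : Finset V)

/-- The `m`-tuples of vertices of `A`, repetitions allowed, that complete `S` to a bad set. -/
def badExtensions (m : ℕ) (S : Finset V) : Finset (Fin m → V) :=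
  {f ∈ Fintype.piFinset fun _ ↦ A | Bad (S ∪ univ.image f)}

/-- Fewer than a proportion `D⁻ᵐ` of the `m`-tuples of vertices of `A` complete `S` to a bad set. -/
def BadExtensionsSparse (D m : ℕ) (S : Finset V) : Prop :=
  D ^ m * #(badExtensions Bad A m S) < #A ^ m

instance (D m : ℕ) (S : Finset V) : Decidable (BadExtensionsSparse Bad A D m S) :=
  inferInstanceAs (Decidable (_ < _))

variable {Bad A} {D m : ℕ} {S : Finset V}

lemma card_badExtensions_of_bad (hBad : Monotone Bad) (hS : Bad S) :
    #(badExtensions Bad A m S) = #A ^ m := by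
  rw [badExtensions, filter_true_of_mem fun f _ ↦ hBad subset_union_left hS,
    Fintype.card_piFinset_const]

variable (Bad A m S) in
lemma card_badExtensions_succ :
    #(badExtensions Bad A (m + 1) S) = ∑ v ∈ A, #(badExtensions Bad A m (insert v S)) := by
  have union_image_cons (v : V) (f : Fin m → V) :
      S ∪ univ.image (Fin.cons v f : Fin (m + 1) → V) = insert v S ∪ univ.image f := by
    ext u
    simp only [mem_union, mem_image, mem_univ, true_and, Fin.exists_fin_succ, Fin.cons_zero,
      Fin.cons_succ, mem_insert, eq_comm (a := v)]
    tauto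
  rw [← card_sigma]
  refine card_nbij' (fun f ↦ ⟨f 0, Fin.tail f⟩) (fun p ↦ Fin.cons p.1 p.2) ?_ ?_ ?_ ?_
  · intro f hf
    simp only [badExtensions, mem_coe, mem_sigma, mem_filter, Fintype.mem_piFinset] at hf ⊢
    refine ⟨hf.1 0, fun i ↦ hf.1 i.succ, ?_⟩
    rw [← union_image_cons, Fin.cons_self_tail]
    exact hf.2
  · rintro ⟨v, f⟩ hf
    simp only [badExtensions, mem_coe, mem_sigma, mem_filter, Fintype.mem_piFinset] at hf ⊢
    exact ⟨Fin.forall_fin_succ.2 ⟨hf.1, hf.2.1⟩, (union_image_cons v f).symm ▸ hf.2.2⟩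
  · exact fun f _ ↦ Fin.cons_self_tail f
  · exact fun p _ ↦ rfl

namespace BadExtensionsSparse

lemma not_bad (h : BadExtensionsSparse Bad A D m S) (hBad : Monotone Bad) (hD : 0 < D) :
    ¬ Bad S := fun hS ↦ by
  rw [BadExtensionsSparse, card_badExtensions_of_bad hBad hS] at h
  exact h.not_ge (Nat.le_mul_of_pos_left _ (pow_pos hD m))

lemma mul_card_filter_not_insert_le (h : BadExtensionsSparse Bad A D (m + 1) S) :
    D * #{v ∈ A | ¬ BadExtensionsSparse Bad A D m (insert v S)} ≤ #A := by
  set B := {v ∈ A | ¬ BadExtensionsSparse Bad A D m (insert v S)}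
  have hB : #B * #A ^ m ≤ D ^ m * #(badExtensions Bad A (m + 1) S) := by
    rw [card_badExtensions_succ, mul_sum, ← smul_eq_mul]
    exact (card_nsmul_le_sum _ _ _ fun v hv ↦ not_lt.1 (mem_filter.1 hv).2).trans
      (sum_le_sum_of_subset (filter_subset _ _))
  have hpow : 0 < #A ^ m := by
    have hA : #A ≠ 0 := (pow_ne_zero_iff m.succ_ne_zero).1 (ne_zero_of_lt h)
    positivity
  refine le_of_mul_le_mul_right (a := #A ^ m) ?_ hpow
  calc D * #B * #A ^ m = D * (#B * #A ^ m) := mul_assoc ..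
    _ ≤ D * (D ^ m * #(badExtensions Bad A (m + 1) S)) := by gcongr
    _ = D ^ (m + 1) * #(badExtensions Bad A (m + 1) S) := by ring
    _ ≤ #A ^ (m + 1) := h.le
    _ = #A * #A ^ m := pow_succ' ..

lemma exists_notMem_forall_insert {ι : Type*} {d : ℕ} {I : Finset ι} {m : ι → ℕ}
    {S : ι → Finset V} {O : Finset V} (hI : #I ≤ d)
    (hS : ∀ y ∈ I, BadExtensionsSparse Bad A (2 * d) (m y + 1) (S y)) (hO : 2 * #O < #A) :
    ∃ v ∉ O, ∀ y ∈ I, BadExtensionsSparse Bad A (2 * d) (m y) (insert v (S y)) := by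
  let B (y : ι) : Finset V := {v ∈ A | ¬ BadExtensionsSparse Bad A (2 * d) (m y) (insert v (S y))}
  have hB : 2 * #(I.biUnion B) ≤ #A := by
    rcases d.eq_zero_or_pos with rfl | hd
    · simp [card_eq_zero.1 (Nat.le_zero.1 hI)]
    refine le_of_mul_le_mul_left (a := d) ?_ hd
    calc d * (2 * #(I.biUnion B)) ≤ d * (2 * ∑ y ∈ I, #(B y)) := by gcongr; exact card_biUnion_le
      _ = ∑ y ∈ I, 2 * d * #(B y) := by rw [← mul_sum]; ring
      _ ≤ #I * #A := sum_le_card_nsmul _ _ _ fun y hy ↦ (hS y hy).mul_card_filter_not_insert_le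
      _ ≤ d * #A := by gcongr
  obtain ⟨v, hvA, hv⟩ : ∃ v ∈ A, v ∉ I.biUnion B ∪ O := by
    refine exists_mem_notMem_of_card_lt_card ?_
    have := card_union_le (I.biUnion B) O
    omega
  simp only [mem_union, mem_biUnion, not_or, not_exists, not_and, B, mem_filter, not_not] at hv
  exact ⟨v, hv.2, fun y hy ↦ hv.1 y hy hvA⟩

end BadExtensionsSparse

section Hypergraph

variable {ι W : Type*} [Fintype ι] [Fintype W] [DecidableEq W] {e : ι → Finset W} {s d : ℕ}

lemma exists_injOn_forall_badExtensionsSparse (he : ∀ y, #(e y) ≤ s)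
    (hd : ∀ x, #{y | x ∈ e y} ≤ d) (hA : 2 * Fintype.card W ≤ #A)
    (h : BadExtensionsSparse Bad A (2 * d) s ∅) (P : Finset W) :
    ∃ g : W → V, Set.InjOn g P ∧ ∀ y,
      BadExtensionsSparse Bad A (2 * d) (s - #(e y ∩ P)) ((e y ∩ P).image g) := by
  induction P using Finset.induction_on with
  | empty =>
    obtain ⟨g⟩ : Nonempty (W → V) := by
      rcases isEmpty_or_nonempty W with _ | _
      · infer_instance
      · have hW : 0 < Fintype.card W := Fintype.card_pos
        obtain ⟨v, -⟩ := card_pos.1 (by omega : 0 < #A)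
        exact ⟨fun _ ↦ v⟩
    exact ⟨g, by simp, fun y ↦ by simpa using h⟩
  | insert x P hx ih =>
    obtain ⟨g, hinj, hg⟩ := ih
    have sub_card_inter (y : ι) (hy : x ∈ e y) :
        s - #(e y ∩ P) = s - #(e y ∩ insert x P) + 1 := by
      have hle := (card_le_card (inter_subset_left (s₁ := e y) (s₂ := insert x P))).trans (he y)
      rw [inter_insert_of_mem hy, card_insert_of_notMem (by simp [hx])] at hle ⊢
      omega
    have hO : 2 * #(P.image g) < #A := by
      have := card_image_le (s := P) (f := g)
      have := card_lt_univ_of_notMem hx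
      omega
    obtain ⟨v, hvP, hv⟩ := BadExtensionsSparse.exists_notMem_forall_insert (hd x)
      (S := fun y ↦ (e y ∩ P).image g) (fun y hy ↦ sub_card_inter y (by simpa using hy) ▸ hg y) hO
    have update_eqOn {T : Finset W} (hT : x ∉ T) : Set.EqOn (Function.update g x v) g T :=
      fun z hz ↦ Function.update_of_ne (ne_of_mem_of_not_mem hz hT) _ _
    refine ⟨Function.update g x v, ?_, fun y ↦ ?_⟩
    · rw [coe_insert, Set.injOn_insert (by simpa using hx), (update_eqOn hx).injOn_iff,
        (update_eqOn hx).image_eq, Function.update_self]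
      exact ⟨hinj, by simpa using hvP⟩
    · have hxy : x ∉ e y ∩ P := by simp [hx]
      by_cases hy : x ∈ e y
      · have := hv y (by simpa using hy)
        rw [inter_insert_of_mem hy] at this ⊢
        rwa [image_insert, Function.update_self, image_congr (update_eqOn hxy)]
      · rw [inter_insert_of_notMem hy, image_congr (update_eqOn hxy)]
        exact hg y

theorem exists_embedding_forall_not_bad (hBad : Monotone Bad) (he : ∀ y, #(e y) ≤ s)
    (hd : ∀ x, #{y | x ∈ e y} ≤ d) (hd₀ : 0 < d) (hA : 2 * Fintype.card W ≤ #A)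
    (h : BadExtensionsSparse Bad A (2 * d) s ∅) :
    ∃ g : W ↪ V, ∀ y, ¬ Bad ((e y).image g) := by
  obtain ⟨g, hinj, hg⟩ := exists_injOn_forall_badExtensionsSparse he hd hA h univ
  refine ⟨⟨g, Set.injOn_univ.1 (coe_univ (α := W) ▸ hinj)⟩, fun y ↦ ?_⟩
  simpa using (hg y).not_bad hBad (by omega)

end Hypergraph

end BadExtensions

section DependentRandomChoice

open Finset
open scoped BigOperators

lemma pow_expect_le_expect_pow {ι : Type*} {s : Finset ι} {f : ι → ℝ} (hs : s.Nonempty)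
    (hf : ∀ i ∈ s, 0 ≤ f i) (n : ℕ) : (𝔼 i ∈ s, f i) ^ n ≤ 𝔼 i ∈ s, f i ^ n := by
  have hw : ∑ _i ∈ s, (#s : ℝ)⁻¹ = 1 := by simp [hs.card_ne_zero]
  simpa only [expect_eq_sum_div_card, sum_div, inv_mul_eq_div] using
    Real.pow_arith_mean_le_arith_mean_pow s (fun _ ↦ (#s : ℝ)⁻¹) f (by simp) hw hf n

variable {α β : Type*} [Fintype α] (R : α → β → Prop) [DecidableRel R]

/-- The vertices related to every vertex of `S`. -/
def commonNeighbors (S : Finset β) : Finset α := {u | ∀ v ∈ S, R u v}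

lemma commonNeighbors_anti : Antitone (commonNeighbors R) := fun _ _ h _ ↦ by
  simp only [commonNeighbors, mem_filter_univ]
  exact fun hu v hv ↦ hu v (h hv)

variable [Fintype β]

lemma sum_card_filter_forall_rel (t : ℕ) :
    ∑ T : Fin t → α, #{v | ∀ i, R (T i) v} = ∑ v, #{u | R u v} ^ t := by
  have hpow (v : β) : #{u | R u v} ^ t = #{T : Fin t → α | ∀ i, R (T i) v} := by
    rw [← Fintype.card_piFinset_const]
    congr 1
    ext T
    simp
  simp_rw [hpow]
  exact sum_card_bipartiteAbove_eq_sum_card_bipartiteBelow fun (T : Fin t → α) v ↦ ∀ i, R (T i) v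

variable {R} in
lemma le_expect_card_filter_forall_rel [Nonempty α] [Nonempty β] {p : ℝ} (hp : 0 ≤ p)
    (hR : p * (Fintype.card α * Fintype.card β) ≤ #{e : α × β | R e.1 e.2}) (t : ℕ) :
    Fintype.card β * p ^ t ≤ 𝔼 T : Fin t → α, (#{v | ∀ i, R (T i) v} : ℝ) := by
  have hα : (0 : ℝ) < Fintype.card α := mod_cast Fintype.card_pos
  have hβ : (0 : ℝ) < Fintype.card β := mod_cast Fintype.card_pos
  have hedges : (#{e : α × β | R e.1 e.2} : ℝ) = ∑ v, (#{u | R u v} : ℝ) := by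
    simp only [card_filter, Fintype.sum_prod_type_right, Nat.cast_sum]
  have hmean : p ≤ 𝔼 v, (#{u | R u v} / Fintype.card α : ℝ) := by
    rw [← expect_div, Fintype.expect_eq_sum_div_card, ← hedges, div_div,
      le_div_iff₀ (by positivity), mul_comm (Fintype.card β : ℝ)]
    exact hR
  calc Fintype.card β * p ^ t
      ≤ Fintype.card β * (𝔼 v, (#{u | R u v} / Fintype.card α : ℝ)) ^ t := by gcongr
    _ ≤ Fintype.card β * 𝔼 v, (#{u | R u v} / Fintype.card α : ℝ) ^ t := by
      gcongr
      exact pow_expect_le_expect_pow univ_nonempty (fun v _ ↦ by positivity) t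
    _ = (∑ v, (#{u | R u v} : ℝ) ^ t) / Fintype.card α ^ t := by
      simp_rw [Fintype.card_mul_expect, div_pow, sum_div]
    _ = 𝔼 T : Fin t → α, (#{v | ∀ i, R (T i) v} : ℝ) := by
      rw [Fintype.expect_eq_sum_div_card, Fintype.card_pi_const]
      exact_mod_cast congrArg (fun n : ℕ ↦ (n : ℝ) / (Fintype.card α ^ t : ℕ))
        (sum_card_filter_forall_rel R t).symm

variable [DecidableEq β]

lemma sum_card_badExtensions_le (s t k : ℕ) :
    ∑ T : Fin t → α,
        #(badExtensions (fun S ↦ #(commonNeighbors R S) < k) {v | ∀ i, R (T i) v} s ∅) ≤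
      Fintype.card β ^ s * k ^ t := by
  let r (T : Fin t → α) (f : Fin s → β) : Prop :=
    (∀ j i, R (T i) (f j)) ∧ #(commonNeighbors R (univ.image f)) < k
  have badExtensions_eq (T : Fin t → α) :
      badExtensions (fun S ↦ #(commonNeighbors R S) < k) {v | ∀ i, R (T i) v} s ∅ =
        univ.bipartiteAbove r T := by
    ext f
    simp [badExtensions, r]
  have card_bipartiteBelow_le (f : Fin s → β) : #(univ.bipartiteBelow r f) ≤ k ^ t := by
    by_cases hf : #(commonNeighbors R (univ.image f)) < k
    · calc #(univ.bipartiteBelow r f)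
          ≤ #(Fintype.piFinset fun _ : Fin t ↦ commonNeighbors R (univ.image f)) := by
            refine card_le_card fun T hT ↦ ?_
            simp only [mem_bipartiteBelow, mem_univ, true_and, r] at hT
            simpa [commonNeighbors] using fun i j ↦ hT.1 j i
        _ ≤ k ^ t := by rw [Fintype.card_piFinset_const]; gcongr
    · simp [bipartiteBelow, r, hf]
  simp_rw [badExtensions_eq, sum_card_bipartiteAbove_eq_sum_card_bipartiteBelow]
  simpa using sum_le_card_nsmul univ _ _ fun f _ ↦ card_bipartiteBelow_le f

variable {R} in
theorem exists_le_card_pow_sub_card_badExtensions [Nonempty α] [Nonempty β] {p c : ℝ}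
    (hp : 0 ≤ p) (hc : 0 ≤ c)
    (hR : p * (Fintype.card α * Fintype.card β) ≤ #{e : α × β | R e.1 e.2}) (s t k : ℕ) :
    ∃ A : Finset β,
      (Fintype.card β : ℝ) ^ s * ((p ^ t) ^ s - c * (k / Fintype.card α) ^ t) ≤
        #A ^ s - c * #(badExtensions (fun S ↦ #(commonNeighbors R S) < k) A s ∅) := by
  let A (T : Fin t → α) : Finset β := {v | ∀ i, R (T i) v}
  let bad (T : Fin t → α) := badExtensions (fun S ↦ #(commonNeighbors R S) < k) (A T) s ∅
  have hA : (Fintype.card β * p ^ t) ^ s ≤ 𝔼 T, (#(A T) : ℝ) ^ s :=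
    (pow_le_pow_left₀ (by positivity) (le_expect_card_filter_forall_rel hp hR t) s).trans
      (pow_expect_le_expect_pow univ_nonempty (fun T _ ↦ by positivity) s)
  have hbad : 𝔼 T, (#(bad T) : ℝ) ≤ Fintype.card β ^ s * (k / Fintype.card α) ^ t := by
    rw [Fintype.expect_eq_sum_div_card, div_pow, ← mul_div_assoc, Fintype.card_pi_const,
      Nat.cast_pow]
    gcongr
    exact_mod_cast sum_card_badExtensions_le R s t k
  obtain ⟨T, -, hT⟩ := exists_le_of_le_expect univ_nonempty <|
    calc (Fintype.card β : ℝ) ^ s * ((p ^ t) ^ s - c * (k / Fintype.card α) ^ t)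
        = (Fintype.card β * p ^ t) ^ s
            - c * (Fintype.card β ^ s * (k / Fintype.card α) ^ t) := by ring
      _ ≤ 𝔼 T, (#(A T) : ℝ) ^ s - c * 𝔼 T, (#(bad T) : ℝ) := by gcongr
      _ = 𝔼 T, ((#(A T) : ℝ) ^ s - c * #(bad T)) := by rw [expect_sub_distrib, mul_expect]
  exact ⟨A T, hT⟩

end DependentRandomChoice

section Embedding

open Finset

variable {V W : Type*} [Fintype W]

lemma exists_embedding_eq_and_mem_of_card_le (g : W ↪ V) (P : W → Prop) {N : W → Finset V}
    (hN : ∀ y, ¬ P y → Fintype.card W ≤ #(N y)) :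
    ∃ f : W ↪ V, (∀ x, P x → f x = g x) ∧ ∀ y, ¬ P y → f y ∈ N y := by
  classical
  let choices (x : W) : Finset V := if P x then {g x} else N x
  have hall (S : Finset W) : #S ≤ #(S.biUnion choices) := by
    by_cases hS : ∃ y ∈ S, ¬ P y
    · obtain ⟨y, hyS, hy⟩ := hS
      calc #S ≤ Fintype.card W := card_le_univ S
        _ ≤ #(N y) := hN y hy
        _ ≤ #(S.biUnion choices) := by
          simpa only [choices, if_neg hy] using card_le_card (subset_biUnion_of_mem choices hyS)
    · push Not at hS
      have himage : S.biUnion choices = S.map g := by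
        rw [biUnion_congr rfl fun x hx ↦ if_pos (hS x hx), biUnion_singleton, map_eq_image]
      rw [himage, card_map]
  obtain ⟨f, hf_inj, hf⟩ := (all_card_le_biUnion_card_iff_exists_injective choices).1 hall
  exact ⟨⟨f, hf_inj⟩, fun x hx ↦ by simpa [choices, hx] using hf x,
    fun y hy ↦ by simpa [choices, hy] using hf y⟩

variable [Fintype V] {R : V → V → Prop} [DecidableRel R] {Δ : ℕ} {p : ℝ}

lemma exists_badExtensionsSparse_of_dense [DecidableEq V] [Nonempty V] {k : ℕ} (hΔ : 0 < Δ)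
    (hk : 0 < k) (hp : 0 ≤ p) (hR : p * Fintype.card V ^ 2 ≤ #{e : V × V | R e.1 e.2})
    (hV : 4 * Δ * k ≤ p ^ Δ * Fintype.card V) :
    ∃ A : Finset V, 2 * k ≤ #A ∧
      BadExtensionsSparse (fun S ↦ #(commonNeighbors R S) < k) A (2 * Δ) Δ ∅ := by
  have : (Fintype.card V : ℝ) ≠ 0 := mod_cast Fintype.card_ne_zero
  have hΔ₁ : (1 : ℝ) ≤ Δ := mod_cast hΔ
  obtain ⟨A, hA⟩ := exists_le_card_pow_sub_card_badExtensions hp (c := (2 * Δ) ^ Δ)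
    (by positivity) (by rwa [← sq]) Δ Δ k
  have hpow : (2 * k : ℝ) ^ Δ + (2 * Δ * k) ^ Δ ≤ (p ^ Δ * Fintype.card V) ^ Δ :=
    calc (2 * k : ℝ) ^ Δ + (2 * Δ * k) ^ Δ ≤ (2 * k + 2 * Δ * k) ^ Δ :=
          pow_add_pow_le (by positivity) (by positivity) hΔ.ne'
      _ ≤ (4 * Δ * k) ^ Δ := by gcongr; nlinarith [(k.cast_nonneg : (0 : ℝ) ≤ k)]
      _ ≤ (p ^ Δ * Fintype.card V) ^ Δ := by gcongr
  have hexpand : (Fintype.card V : ℝ) ^ Δ *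
      ((p ^ Δ) ^ Δ - (2 * Δ) ^ Δ * (k / Fintype.card V) ^ Δ) =
        (p ^ Δ * Fintype.card V) ^ Δ - (2 * Δ * k) ^ Δ := by
    rw [div_pow]
    field_simp
    ring
  have hgap : (2 * k) ^ Δ + (2 * Δ) ^ Δ *
      #(badExtensions (fun S ↦ #(commonNeighbors R S) < k) A Δ ∅) ≤ #A ^ Δ := by
    exact_mod_cast show (2 * k : ℝ) ^ Δ + (2 * Δ) ^ Δ *
      #(badExtensions (fun S ↦ #(commonNeighbors R S) < k) A Δ ∅) ≤ #A ^ Δ by linarith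
  have hpos : 0 < (2 * k) ^ Δ := by positivity
  exact ⟨A, (Nat.pow_le_pow_iff_left hΔ.ne').1 (by omega), by rw [BadExtensionsSparse]; omega⟩

theorem exists_embedding_of_dense {G : SimpleGraph W} [DecidableRel G.Adj] (hG : G.IsBipartite)
    (hdeg : ∀ x, G.degree x ≤ Δ) (hΔ : 0 < Δ) (hp : 0 ≤ p) (hsymm : ∀ u v, R u v → R v u)
    (hR : p * Fintype.card V ^ 2 ≤ #{e : V × V | R e.1 e.2})
    (hV : 4 * Δ * Fintype.card W ≤ p ^ Δ * Fintype.card V) :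
    ∃ f : W ↪ V, ∀ a b, G.Adj a b → R (f a) (f b) := by
  classical
  rcases isEmpty_or_nonempty W with _ | _
  · exact ⟨.ofIsEmpty, isEmptyElim⟩
  have hW : 0 < Fintype.card W := Fintype.card_pos
  have : Nonempty V := by
    by_contra! hV₀
    have : (0 : ℝ) < 4 * Δ * Fintype.card W := by positivity
    rw [Fintype.card_eq_zero (α := V), Nat.cast_zero, mul_zero] at hV
    linarith
  obtain ⟨A, hA, hsparse⟩ := exists_badExtensionsSparse_of_dense hΔ hW hp hR hV
  obtain ⟨g, hg⟩ := exists_embedding_forall_not_bad (e := fun y ↦ G.neighborFinset y)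
    (fun S T hST hS ↦ (card_le_card (commonNeighbors_anti R hST)).trans_lt hS) hdeg
    (fun x ↦ by simpa [G.adj_comm, ← SimpleGraph.neighborFinset_eq_filter] using hdeg x)
    hΔ hA hsparse
  obtain ⟨C⟩ := hG
  obtain ⟨f, hfg, hf⟩ := exists_embedding_eq_and_mem_of_card_le g (fun x ↦ C x = 0)
    (N := fun y ↦ commonNeighbors R ((G.neighborFinset y).image g)) fun y _ ↦ not_lt.1 (hg y)
  have rel_of_adj {x y : W} (hx : C x = 0) (hy : C y ≠ 0) (hyx : G.Adj y x) :
      R (f y) (f x) := by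
    have hmem := hf y hy
    simp only [commonNeighbors, mem_filter_univ] at hmem
    exact hfg x hx ▸ hmem _ (mem_image_of_mem g (by simpa using hyx))
  refine ⟨f, fun a b hab ↦ ?_⟩
  have hne := C.valid hab
  by_cases ha : C a = 0
  · exact hsymm _ _ (rel_of_adj ha (fun hb ↦ hne (ha.trans hb.symm)) hab.symm)
  · exact rel_of_adj (by omega) ha hab

theorem exists_monochromatic_embedding {K : Type*} [Fintype K] [Nonempty K] {G : SimpleGraph W}
    [DecidableRel G.Adj] (hG : G.IsBipartite) (hdeg : ∀ x, G.degree x ≤ Δ) (hΔ : 0 < Δ)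
    {c : V → V → K} (hsymm : ∀ u v, c u v = c v u)
    (hV : 4 * Δ * Fintype.card K ^ Δ * Fintype.card W ≤ Fintype.card V) :
    ∃ (col : K) (f : W ↪ V), ∀ a b, G.Adj a b → c (f a) (f b) = col := by
  classical
  have hK : (0 : ℝ) < Fintype.card K := mod_cast Fintype.card_pos
  obtain ⟨col, hcol⟩ := Fintype.exists_le_card_fiber_of_nsmul_le_card
    (fun e : V × V ↦ c e.1 e.2) (b := (Fintype.card K : ℝ)⁻¹ * Fintype.card V ^ 2) (by
      rw [nsmul_eq_mul, mul_inv_cancel_left₀ hK.ne', Fintype.card_prod, Nat.cast_mul, sq])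
  refine ⟨col, exists_embedding_of_dense (R := fun u v ↦ c u v = col) hG hdeg hΔ
    (inv_nonneg.2 hK.le) (fun u v h ↦ hsymm v u ▸ h) hcol ?_⟩
  rw [inv_pow, le_inv_mul_iff₀ (by positivity)]
  calc (Fintype.card K : ℝ) ^ Δ * (4 * Δ * Fintype.card W)
      = (4 * Δ * Fintype.card K ^ Δ * Fintype.card W : ℕ) := by push_cast; ring
    _ ≤ Fintype.card V := mod_cast hV

end Embedding

section Covering

open Finset

variable {V : Type*} [Fintype V] [DecidableEq V] {Good : Finset V → Prop} {C : ℝ}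

lemma exists_disjoint_family_card_compl_le (hC : 1 ≤ C)
    (hstep : ∀ U : Finset V, U.Nonempty → ∃ p ⊆ U, #U ≤ C * #p ∧ Good p) (m : ℕ) :
    ∃ s ≤ m, ∃ parts : Fin s → Finset V, Pairwise (Function.onFun Disjoint parts) ∧
      (∀ j, Good (parts j)) ∧ #(univ.biUnion parts)ᶜ ≤ Fintype.card V * (1 - 1 / C) ^ m := by
  have hC₀ : 0 < C := by positivity
  have hratio : 0 ≤ 1 - 1 / C := sub_nonneg.2 ((div_le_one hC₀).2 hC)
  induction m with
  | zero => exact ⟨0, le_rfl, Fin.elim0, by simp [Pairwise]⟩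
  | succ m ih =>
    obtain ⟨s, hs, parts, hdisj, hgood, hcard⟩ := ih
    set U := (univ.biUnion parts)ᶜ with hU
    rcases U.eq_empty_or_nonempty with hempty | hne
    · refine ⟨s, by omega, parts, hdisj, hgood, ?_⟩
      rw [← hU, hempty, card_empty, Nat.cast_zero]
      positivity
    obtain ⟨p, hpU, hUp, hp⟩ := hstep U hne
    have hpdisj (j : Fin s) : Disjoint p (parts j) :=
      (disjoint_compl_left.mono_left hpU).mono_right (subset_biUnion_of_mem parts (mem_univ j))
    have hcompl : (univ.biUnion (Fin.cons p parts : Fin (s + 1) → Finset V))ᶜ = U \ p := by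
      ext u
      simp [hU, Fin.forall_fin_succ, and_comm]
    refine ⟨s + 1, by omega, Fin.cons p parts,
      pairwise_fin_succ_iff.2 ⟨fun j ↦ (hpdisj j).symm, hpdisj, hdisj⟩,
      Fin.forall_fin_succ.2 ⟨hp, hgood⟩, ?_⟩
    have hle : (#U : ℝ) / C ≤ #p := (div_le_iff₀' hC₀).2 hUp
    rw [hcompl, cast_card_sdiff hpU]
    calc (#U : ℝ) - #p ≤ #U - #U / C := by gcongr
      _ = #U * (1 - 1 / C) := by ring
      _ ≤ Fintype.card V * (1 - 1 / C) ^ m * (1 - 1 / C) := by gcongr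
      _ = Fintype.card V * (1 - 1 / C) ^ (m + 1) := by ring

lemma mul_one_sub_one_div_pow_lt {x t : ℝ} {m : ℕ} (hC : 1 ≤ C) (hx : 0 < x) (ht : 0 < t)
    (hm : C * Real.log (x / t) < m) : x * (1 - 1 / C) ^ m < t := by
  have hC₀ : 0 < C := by positivity
  have hratio : 0 ≤ 1 - 1 / C := sub_nonneg.2 ((div_le_one hC₀).2 hC)
  calc x * (1 - 1 / C) ^ m ≤ x * Real.exp (-(1 / C)) ^ m := by
        gcongr
        exact Real.one_sub_le_exp_neg _
    _ = x * Real.exp (-(m / C)) := by rw [← Real.exp_nat_mul]; ring_nf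
    _ < x * Real.exp (-Real.log (x / t)) := by
        gcongr
        rwa [lt_div_iff₀' hC₀]
    _ = t := by rw [Real.exp_neg, Real.exp_log (by positivity)]; field_simp

theorem exists_disjoint_family_lt_card {t : ℝ} (ht₀ : 0 < t) (ht : t ≤ Fintype.card V)
    (hC : 1 ≤ C)
    (hstep : ∀ U : Finset V, U.Nonempty → ∃ p ⊆ U, #U ≤ C * #p ∧ Good p) :
    ∃ (s : ℕ) (parts : Fin s → Finset V), s ≤ C * Real.log (Fintype.card V / t) + 1 ∧
      Pairwise (Function.onFun Disjoint parts) ∧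
      Fintype.card V - t < #(univ.biUnion parts) ∧ ∀ j, Good (parts j) := by
  set L := C * Real.log (Fintype.card V / t)
  have hL : 0 ≤ L := mul_nonneg (by linarith) (Real.log_nonneg ((one_le_div ht₀).2 ht))
  obtain ⟨s, hs, parts, hdisj, hgood, hcard⟩ :=
    exists_disjoint_family_card_compl_le hC hstep (⌊L⌋₊ + 1)
  refine ⟨s, parts, ?_, hdisj, ?_, hgood⟩
  · calc (s : ℝ) ≤ (⌊L⌋₊ + 1 : ℕ) := mod_cast hs
      _ ≤ L + 1 := by push_cast; gcongr; exact Nat.floor_le hL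
  · have hrest : (#(univ.biUnion parts)ᶜ : ℝ) < t := hcard.trans_lt <|
      mul_one_sub_one_div_pow_lt hC (ht₀.trans_le ht) ht₀ (mod_cast Nat.lt_floor_add_one L)
    have hsum : (#(univ.biUnion parts) + #(univ.biUnion parts)ᶜ : ℝ) = Fintype.card V :=
      mod_cast card_add_card_compl _
    linarith

end Covering

section MonochromaticCopies

open Finset

variable {V K : Type*}

/-- `p` is the vertex set of a copy of some `F i`, `i ≥ 1`, all of whose edges have the same colour
under `c`. The copy need not be induced, and the colour `c u u` of a loop is irrelevant. -/
def IsMonochromaticCopy (F : ∀ i, SimpleGraph (Fin i)) (c : V → V → K) (p : Finset V) : Prop :=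
  ∃ (i : ℕ) (_ : 1 ≤ i) (col : K) (f : Fin i ↪ V),
    univ.map f = p ∧ ∀ a b, (F i).Adj a b → c (f a) (f b) = col

variable {F : ∀ i, SimpleGraph (Fin i)} {c : V → V → K} {Δ : ℕ}

lemma isMonochromaticCopy_singleton (v : V) : IsMonochromaticCopy F c {v} :=
  ⟨1, le_rfl, c v v, ⟨fun _ ↦ v, Function.injective_of_subsingleton _⟩, by simp,
    fun a b hab ↦ (hab.ne (Subsingleton.elim a b)).elim⟩

variable [Fintype K]

lemma exists_isMonochromaticCopy_card_eq [Nonempty K] (hbip : ∀ i, 1 ≤ i → (F i).IsBipartite)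
    (hdeg : ∀ i, 1 ≤ i → ∀ v, ((F i).neighborSet v).ncard ≤ Δ) (hΔ : 0 < Δ)
    (hsymm : ∀ u v, c u v = c v u) {U : Finset V} {k : ℕ} (hk : 1 ≤ k)
    (hU : 4 * Δ * Fintype.card K ^ Δ * k ≤ #U) :
    ∃ p ⊆ U, #p = k ∧ IsMonochromaticCopy F c p := by
  classical
  have degree_le (v : Fin k) : (F k).degree v ≤ Δ := by
    rw [← SimpleGraph.card_neighborSet_eq_degree, ← Nat.card_eq_fintype_card, Nat.card_coe_set_eq]
    exact hdeg k hk v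
  obtain ⟨col, f, hf⟩ := exists_monochromatic_embedding (hbip k hk) degree_le hΔ
    (c := fun u v : U ↦ c u v) (fun u v ↦ hsymm u v) (by simpa using hU)
  refine ⟨univ.map (f.trans (.subtype _)), ?_, by simp, k, hk, col, _, rfl, hf⟩
  rw [← map_map]
  exact map_subtype_subset _

theorem exists_isMonochromaticCopy_card_le (hbip : ∀ i, 1 ≤ i → (F i).IsBipartite)
    (hdeg : ∀ i, 1 ≤ i → ∀ v, ((F i).neighborSet v).ncard ≤ Δ) (hΔ : 0 < Δ)
    (hsymm : ∀ u v, c u v = c v u) {U : Finset V} (hU : U.Nonempty) :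
    ∃ p ⊆ U, #U ≤ 8 * Δ * Fintype.card K ^ Δ * #p ∧ IsMonochromaticCopy F c p := by
  obtain ⟨u, hu⟩ := hU
  have : Nonempty K := ⟨c u u⟩
  set M := 4 * Δ * Fintype.card K ^ Δ with hM
  have hM₀ : 0 < M := by positivity
  have h2M : 8 * Δ * Fintype.card K ^ Δ = 2 * M := by rw [hM]; ring
  rw [h2M]
  rcases lt_or_ge #U M with hlt | hge
  · exact ⟨{u}, singleton_subset_iff.2 hu, by rw [card_singleton]; omega,
      isMonochromaticCopy_singleton u⟩
  · have hk : 1 ≤ #U / M := (Nat.one_le_div_iff hM₀).2 hge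
    obtain ⟨p, hpU, hp, hcopy⟩ := exists_isMonochromaticCopy_card_eq hbip hdeg hΔ hsymm hk
      (Nat.mul_div_le #U M)
    refine ⟨p, hpU, ?_, hcopy⟩
    rw [hp]
    calc #U ≤ M * (#U / M + 1) := (Nat.lt_mul_div_succ #U hM₀).le
      _ ≤ M * (#U / M + #U / M) := by gcongr
      _ = 2 * M * (#U / M) := by ring

theorem stmt_4_general [Fintype V] [DecidableEq V] (hbip : ∀ i, 1 ≤ i → (F i).IsBipartite)
    (hdeg : ∀ i, 1 ≤ i → ∀ v, ((F i).neighborSet v).ncard ≤ Δ) (hΔ : 0 < Δ)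
    (hsymm : ∀ u v, c u v = c v u) {t : ℝ} (ht₀ : 0 < t) (ht : t ≤ Fintype.card V) :
    ∃ (s : ℕ) (parts : Fin s → Finset V),
      s ≤ 8 * Δ * Fintype.card K ^ Δ * (Real.log (Fintype.card V / t) + 1) ∧
      Pairwise (Function.onFun Disjoint parts) ∧
      Fintype.card V - t < #(univ.biUnion parts) ∧ ∀ j, IsMonochromaticCopy F c (parts j) := by
  have : Nonempty V := Fintype.card_pos_iff.1 (mod_cast ht₀.trans_le ht)
  have : Nonempty K := this.map fun v ↦ c v v
  have hC : (1 : ℝ) ≤ 8 * Δ * Fintype.card K ^ Δ := by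
    exact_mod_cast (by positivity : 0 < 8 * Δ * Fintype.card K ^ Δ)
  obtain ⟨s, parts, hs, hcover⟩ := exists_disjoint_family_lt_card ht₀ ht hC fun U hU ↦ by
    exact_mod_cast exists_isMonochromaticCopy_card_le hbip hdeg hΔ hsymm hU
  exact ⟨s, parts, by linarith, hcover⟩

end MonochromaticCopies

/-- Covering all but fewer than `t` vertices by few vertex-disjoint monochromatic
subgraphs from a bipartite Δ-bounded graph sequence. -/
theorem stmt_4 (r Δ : ℕ) (hr : 0 < r) (hΔ : 0 < Δ)
    (F : (i : ℕ) → SimpleGraph (Fin i))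
    (hbip : ∀ i, 1 ≤ i → (F i).Colorable 2)
    (hdeg : ∀ i, 1 ≤ i → ∀ v, ((F i).neighborSet v).ncard ≤ Δ)
    (n : ℕ) (t : ℝ) (ht0 : 0 < t) (htn : t ≤ n)
    (c : Fin n → Fin n → Fin r) (hsym : ∀ a b, c a b = c b a) :
    ∃ (s : ℕ) (parts : Fin s → Finset (Fin n)),
      (s : ℝ) ≤ 64 * Δ * (r : ℝ) ^ Δ * (Real.log ((n : ℝ) / t) + 2) ∧
      (∀ j j', j ≠ j' → Disjoint (parts j) (parts j')) ∧
      (n : ℝ) - t < ((Finset.univ.biUnion parts).card : ℝ) ∧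
      ∀ j, ∃ (i : ℕ) (_ : 1 ≤ i) (col : Fin r) (f : Fin i ↪ Fin n),
        Finset.univ.map f = parts j ∧
        ∀ a b, (F i).Adj a b → c (f a) (f b) = col := by
  have hlog : 0 ≤ Real.log (n / t) := Real.log_nonneg ((one_le_div ht0).2 htn)
  obtain ⟨s, parts, hs, hdisj, hcover, hcopy⟩ :=
    stmt_4_general hbip hdeg hΔ hsym ht0 (by rwa [Fintype.card_fin])
  simp only [Fintype.card_fin] at hs hcover
  refine ⟨s, parts, hs.trans ?_, fun _ _ h ↦ hdisj h, hcover, hcopy⟩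
  gcongr <;> norm_num
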